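/- Let q_-, q_+, a > 0 be real constants, κ ∈ L^∞(-1,1), and ψ : ℝ → ℝ be smooth with compact support. Define Q_ε(x) = q_- /x for −a < x < −ε, Q_ε(x) = q_+/x for ε < x < a, Q_ε(x) = (ln ε/ε) κ(x/ε) for |x| < ε, and Q_ε(x) = 0 for |x| ≥ a. Then the limit of ∫_ℝ Q_ε ψ dx as ε → 0+ exists for every such ψ if and only if q_+ − q_- = ∫_{-1}^{1} κ(t) dt. -/

import Mathlib

open MeasureTheory Filter

/-!
Test `Q_ε` against `ψ`. Outside `(-ε, ε)`, writing `ψ x = ψ 0 + x φ x` with `φ` continuous, each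
Coulomb tail contributes a multiple of `ψ 0 * log ε` plus an integral of `φ` that converges.
Inside, rescaling by `ε` turns the contribution into `log ε ∫ ψ (ε t) κ t dt`, which is
`ψ 0 * log ε * ∫ κ` up to `O (ε log ε)`. Hence `∫ Q_ε ψ` equals
`ψ 0 * log ε * (∫ κ - (q₊ - q₋))` plus a convergent term, and since `log ε` diverges, the limit
exists for all `ψ` exactly when the coefficient vanishes.
-/

section RegularizedCoulomb

open Set Topology Asymptotics

variable {E : Type*} [NormedAddCommGroup E] [NormedSpace ℝ E]

theorem eq_zero_of_tendsto_smul_const {ι 𝕜 F : Type*} [NormedField 𝕜] [NormedAddCommGroup F]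
    [NormedSpace 𝕜 F] {l : Filter ι} [l.NeBot] {f : ι → 𝕜} {v w : F}
    (hf : Tendsto f l (Bornology.cobounded 𝕜)) (hv : Tendsto (fun i ↦ f i • v) l (𝓝 w)) :
    v = 0 := by
  have hcancel : (fun i ↦ (f i)⁻¹ • f i • v) =ᶠ[l] fun _ ↦ v :=
    (hf.eventually_ne_cobounded 0).mono fun i hi ↦ inv_smul_smul₀ hi v
  have hzero : Tendsto (fun i ↦ (f i)⁻¹ • f i • v) l (𝓝 ((0 : 𝕜) • w)) :=
    (tendsto_inv₀_cobounded.comp hf).smul hv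
  rw [zero_smul] at hzero
  exact tendsto_nhds_unique tendsto_const_nhds (hzero.congr' hcancel)

theorem continuous_dslope {𝕜 F : Type*} [NontriviallyNormedField 𝕜] [NormedAddCommGroup F]
    [NormedSpace 𝕜 F] {f : 𝕜 → F} {x₀ : 𝕜} (hf : Continuous f)
    (hd : DifferentiableAt 𝕜 f x₀) : Continuous (dslope f x₀) := by
  rw [← continuousOn_univ]
  exact (continuousOn_dslope univ_mem).2 ⟨hf.continuousOn, hd⟩

theorem intervalIntegrable_inv_smul_of_zero_notMem {f : ℝ → E} (hf : Continuous f) {u v : ℝ}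
    (h0 : (0 : ℝ) ∉ uIcc u v) : IntervalIntegrable (fun x ↦ x⁻¹ • f x) volume u v :=
  (continuousOn_inv₀.mono fun _ hx ↦ ne_of_mem_of_not_mem hx h0).smul hf.continuousOn
    |>.intervalIntegrable

theorem integral_inv_smul_eq_integral_dslope_add [CompleteSpace E] {f : ℝ → E} (hf : Continuous f)
    (hd : DifferentiableAt ℝ f 0) {ε a : ℝ} (hε : 0 < ε) (ha : 0 < a) :
    ∫ x in ε..a, x⁻¹ • f x = (∫ x in ε..a, dslope f 0 x) + Real.log (a / ε) • f 0 := by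
  have h0 : (0 : ℝ) ∉ uIcc ε a := notMem_uIcc_of_lt hε ha
  have hsplit : ∀ x ∈ uIcc ε a, x⁻¹ • f x = dslope f 0 x + x⁻¹ • f 0 := fun x hx ↦ by
    have hx0 : x ≠ 0 := ne_of_mem_of_not_mem hx h0
    rw [dslope_of_ne _ hx0, slope_def_module, sub_zero, smul_sub, sub_add_cancel]
  rw [intervalIntegral.integral_congr hsplit,
    intervalIntegral.integral_add ((continuous_dslope hf hd).intervalIntegrable _ _)
      (intervalIntegrable_inv_smul_of_zero_notMem continuous_const h0),
    intervalIntegral.integral_smul_const, integral_inv_of_pos hε ha]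

theorem tendsto_integral_inv_smul_add_log_smul [CompleteSpace E] {f : ℝ → E} (hf : Continuous f)
    (hd : DifferentiableAt ℝ f 0) {a : ℝ} (ha : 0 < a) :
    Tendsto (fun ε ↦ (∫ x in ε..a, x⁻¹ • f x) + Real.log ε • f 0) (𝓝[>] 0)
      (𝓝 ((∫ x in (0 : ℝ)..a, dslope f 0 x) + Real.log a • f 0)) := by
  have hprim : Continuous fun ε ↦ ∫ x in ε..a, dslope f 0 x := by
    simp only [fun ε ↦ intervalIntegral.integral_symm (f := dslope f 0) (μ := volume) a ε]
    exact (intervalIntegral.continuous_primitive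
      (fun _ _ ↦ (continuous_dslope hf hd).intervalIntegrable _ _) a).neg
  refine ((hprim.tendsto 0).mono_left nhdsWithin_le_nhds |>.add_const _).congr' ?_
  filter_upwards [self_mem_nhdsWithin] with ε hε
  rw [integral_inv_smul_eq_integral_dslope_add hf hd hε ha,
    Real.log_div ha.ne' (ne_of_gt hε), sub_smul]
  abel

theorem isBigO_integral_comp_mul_sub_smul {ψ : ℝ → ℝ} (hd : DifferentiableAt ℝ ψ 0)
    {κ : ℝ → E} {u v : ℝ} (hκ : IntervalIntegrable κ volume u v) :
    (fun ε ↦ ∫ t in u..v, (ψ (ε * t) - ψ 0) • κ t) =O[𝓝 0] fun ε ↦ ε := by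
  obtain ⟨M, hM⟩ := hd.isBigO_sub.bound
  obtain ⟨δ, hδ, hball⟩ := Metric.eventually_nhds_iff.1 hM
  set R := max |u| |v|
  have hsmall : ∀ᶠ ε : ℝ in 𝓝 0, |ε| * R < δ :=
    (by fun_prop : Continuous fun ε : ℝ ↦ |ε| * R).tendsto' 0 0 (by simp)
      |>.eventually (gt_mem_nhds hδ)
  refine .of_bound |∫ t in u..v, M * ‖t • κ t‖| (hsmall.mono fun ε hε ↦ ?_)
  have hpointwise : ∀ t ∈ uIoc u v,
      ‖(ψ (ε * t) - ψ 0) • κ t‖ ≤ |ε| * (M * ‖t • κ t‖) := fun t ht ↦ by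
    have htR : |t| ≤ R := by
      rw [uIoc, mem_Ioc] at ht
      grind
    have hεt : dist (ε * t) 0 < δ := by
      rw [dist_zero_right, norm_mul]
      exact (mul_le_mul_of_nonneg_left htR (abs_nonneg ε)).trans_lt hε
    calc ‖(ψ (ε * t) - ψ 0) • κ t‖ ≤ M * ‖ε * t - 0‖ * ‖κ t‖ := by
          rw [norm_smul]
          exact mul_le_mul_of_nonneg_right (hball hεt) (norm_nonneg _)
      _ = |ε| * (M * ‖t • κ t‖) := by
          rw [sub_zero, norm_mul, norm_smul, Real.norm_eq_abs ε]
          ring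
  have hdom : IntervalIntegrable (fun t ↦ |ε| * (M * ‖t • κ t‖)) volume u v :=
    ((hκ.continuousOn_smul continuousOn_id).norm.const_mul M).const_mul |ε|
  calc ‖∫ t in u..v, (ψ (ε * t) - ψ 0) • κ t‖
      ≤ |∫ t in u..v, |ε| * (M * ‖t • κ t‖)| :=
        intervalIntegral.norm_integral_le_abs_of_norm_le
          (ae_restrict_of_forall_mem measurableSet_uIoc hpointwise) hdom
    _ = |∫ t in u..v, M * ‖t • κ t‖| * ‖ε‖ := by
        rw [intervalIntegral.integral_const_mul, abs_mul, abs_abs, mul_comm, Real.norm_eq_abs]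

theorem tendsto_log_smul_integral_comp_mul_sub {ψ : ℝ → ℝ} (hψ : Continuous ψ)
    (hd : DifferentiableAt ℝ ψ 0) {κ : ℝ → E} {u v : ℝ} (hκ : IntervalIntegrable κ volume u v) :
    Tendsto (fun ε ↦ Real.log ε • (∫ t in u..v, ψ (ε * t) • κ t) -
      (ψ 0 * Real.log ε) • ∫ t in u..v, κ t) (𝓝[>] 0) (𝓝 0) := by
  have hlog : Tendsto (fun ε ↦ Real.log ε • ε) (𝓝[>] 0) (𝓝 0) := by
    simpa only [smul_eq_mul, mul_comm, zero_mul] using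
      (Real.continuous_mul_log.tendsto 0).mono_left nhdsWithin_le_nhds
  refine (((isBigO_refl Real.log _).smul ((isBigO_integral_comp_mul_sub_smul hd hκ).mono
    nhdsWithin_le_nhds)).trans_tendsto hlog).congr fun ε ↦ ?_
  have hψκ : IntervalIntegrable (fun t ↦ ψ (ε * t) • κ t) volume u v :=
    hκ.continuousOn_smul (by fun_prop)
  simp only [sub_smul]
  rw [intervalIntegral.integral_sub hψκ (hκ.continuousOn_smul continuousOn_const),
    intervalIntegral.integral_smul, smul_sub, smul_smul, mul_comm (Real.log ε)]

/-- The regularized potential `Q_ε` with values in a normed space: equal to `q₋ / x` on `(-a, -ε]`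
and `q₊ / x` on `[ε, a)`, to the profile `(log ε / ε) κ (x / ε)` on `(-ε, ε)`, and zero
elsewhere. -/
noncomputable def regularizedCoulomb (qm qp : E) (a : ℝ) (κ : ℝ → E) (ε x : ℝ) : E :=
  if |x| < ε then (Real.log ε / ε) • κ (x / ε)
  else if |x| < a then x⁻¹ • (if x < 0 then qm else qp)
  else 0

namespace regularizedCoulomb

variable {qm qp : E} {a ε x : ℝ} {κ : ℝ → E}

theorem of_mem_core (hx : x ∈ Ioo (-ε) ε) :
    regularizedCoulomb qm qp a κ ε x = (Real.log ε / ε) • κ (x / ε) :=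
  if_pos (abs_lt.2 hx)

theorem of_mem_left (hε : 0 < ε) (hx : x ∈ Ioo (-a) (-ε)) :
    regularizedCoulomb qm qp a κ ε x = x⁻¹ • qm := by
  have hx0 : x < 0 := by linarith [hx.2]
  rw [regularizedCoulomb, abs_of_neg hx0, if_neg (by linarith [hx.2]), if_pos (by linarith [hx.1]),
    if_pos hx0]

theorem of_mem_right (hε : 0 < ε) (hx : x ∈ Ioo ε a) :
    regularizedCoulomb qm qp a κ ε x = x⁻¹ • qp := by
  have hx0 : 0 < x := hε.trans hx.1
  rw [regularizedCoulomb, abs_of_pos hx0, if_neg hx.1.not_gt, if_pos hx.2, if_neg hx0.not_gt]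

theorem support_subset (hεa : ε ≤ a) :
    Function.support (regularizedCoulomb qm qp a κ ε) ⊆ Ioo (-a) a := fun x hx ↦ by
  by_contra hxa
  have hax : a ≤ |x| := not_lt.1 fun h ↦ hxa (abs_lt.1 h)
  exact hx (by rw [regularizedCoulomb, if_neg (hεa.trans hax).not_gt, if_neg hax.not_gt])

end regularizedCoulomb

theorem integral_smul_comp_div (ψ : ℝ → ℝ) (κ : ℝ → E) {ε : ℝ} (hε : ε ≠ 0) :
    ∫ x in -ε..ε, ψ x • κ (x / ε) = ε • ∫ t in (-1 : ℝ)..1, ψ (ε * t) • κ t := by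
  simpa only [mul_div_cancel₀ _ hε, neg_div, div_self hε] using
    intervalIntegral.integral_comp_div (a := -ε) (b := ε) (fun t ↦ ψ (ε * t) • κ t) hε

theorem integral_smul_regularizedCoulomb [CompleteSpace E] {ψ : ℝ → ℝ} (hψ : Continuous ψ)
    {κ : ℝ → E} (hκ : IntervalIntegrable κ volume (-1) 1) (qm qp : E) {a ε : ℝ} (hε : 0 < ε)
    (hεa : ε < a) :
    ∫ x, ψ x • regularizedCoulomb qm qp a κ ε x =
      (∫ x in -a..-ε, x⁻¹ • ψ x) • qm + Real.log ε • (∫ t in (-1 : ℝ)..1, ψ (ε * t) • κ t) +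
        (∫ x in ε..a, x⁻¹ • ψ x) • qp := by
  set Qψ := fun x ↦ ψ x • regularizedCoulomb qm qp a κ ε x
  have hsupport : Function.support Qψ ⊆ Ioc (-a) a :=
    (Function.support_smul_subset_right ψ _).trans
      ((regularizedCoulomb.support_subset hεa.le).trans Ioo_subset_Ioc_self)
  have eqOn_left : EqOn (fun x ↦ (x⁻¹ • ψ x) • qm) Qψ (uIoo (-a) (-ε)) := fun x hx ↦ by
    rw [uIoo_of_le (by linarith)] at hx
    simp only [Qψ, regularizedCoulomb.of_mem_left hε hx, smul_smul, smul_eq_mul, mul_comm]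
  have eqOn_core : EqOn (fun x ↦ (Real.log ε / ε) • ψ x • κ (x / ε)) Qψ (uIoo (-ε) ε) :=
    fun x hx ↦ by
      rw [uIoo_of_le (by linarith)] at hx
      simp only [Qψ, regularizedCoulomb.of_mem_core hx, smul_comm (ψ x)]
  have eqOn_right : EqOn (fun x ↦ (x⁻¹ • ψ x) • qp) Qψ (uIoo ε a) := fun x hx ↦ by
    rw [uIoo_of_le hεa.le] at hx
    simp only [Qψ, regularizedCoulomb.of_mem_right hε hx, smul_smul, smul_eq_mul, mul_comm]
  have int_left : IntervalIntegrable Qψ volume (-a) (-ε) :=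
    ((intervalIntegrable_inv_smul_of_zero_notMem hψ (notMem_uIcc_of_gt (by linarith)
      (by linarith))).smul_continuousOn continuousOn_const).congr_uIoo eqOn_left
  have int_profile : IntervalIntegrable (fun x ↦ κ (x / ε)) volume (-ε) ε := by
    simpa [div_eq_inv_mul] using hκ.comp_mul_left (c := ε⁻¹)
  have int_core : IntervalIntegrable Qψ volume (-ε) ε :=
    ((int_profile.continuousOn_smul hψ.continuousOn).continuousOn_smul
      continuousOn_const).congr_uIoo eqOn_core
  have int_right : IntervalIntegrable Qψ volume ε a :=
    ((intervalIntegrable_inv_smul_of_zero_notMem hψ (notMem_uIcc_of_lt hε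
      (hε.trans hεa))).smul_continuousOn continuousOn_const).congr_uIoo eqOn_right
  rw [← intervalIntegral.integral_eq_integral_of_support_subset hsupport,
    ← intervalIntegral.integral_add_adjacent_intervals (int_left.trans int_core) int_right,
    ← intervalIntegral.integral_add_adjacent_intervals int_left int_core,
    ← intervalIntegral.integral_congr_uIoo eqOn_left,
    ← intervalIntegral.integral_congr_uIoo eqOn_core,
    ← intervalIntegral.integral_congr_uIoo eqOn_right,
    intervalIntegral.integral_smul_const, intervalIntegral.integral_smul_const,
    intervalIntegral.integral_smul, integral_smul_comp_div ψ κ hε.ne', smul_smul,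
    div_mul_cancel₀ _ hε.ne']

theorem exists_tendsto_integral_smul_regularizedCoulomb_sub [CompleteSpace E] {ψ : ℝ → ℝ}
    (hψ : Continuous ψ) (hd : DifferentiableAt ℝ ψ 0) {κ : ℝ → E}
    (hκ : IntervalIntegrable κ volume (-1) 1) (qm qp : E) {a : ℝ} (ha : 0 < a) :
    ∃ L, Tendsto (fun ε ↦ (∫ x, ψ x • regularizedCoulomb qm qp a κ ε x) -
      (ψ 0 * Real.log ε) • ((∫ t in (-1 : ℝ)..1, κ t) - (qp - qm))) (𝓝[>] 0) (𝓝 L) := by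
  have hright := (tendsto_integral_inv_smul_add_log_smul hψ hd ha).smul_const qp
  have hleft := (tendsto_integral_inv_smul_add_log_smul (f := fun x ↦ ψ (-x)) (by fun_prop)
    (differentiableAt_comp_neg.2 (by rwa [neg_zero])) ha).smul_const qm
  have hcore := tendsto_log_smul_integral_comp_mul_sub hψ hd hκ
  refine ⟨_, ((hright.sub hleft).add hcore).congr' ?_⟩
  filter_upwards [Ioo_mem_nhdsGT ha] with ε hε
  have hreflect : ∫ x in -a..-ε, x⁻¹ • ψ x = -∫ x in ε..a, x⁻¹ • ψ (-x) := by
    simp only [← intervalIntegral.integral_comp_neg, inv_neg, neg_smul,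
      intervalIntegral.integral_neg]
  rw [integral_smul_regularizedCoulomb hψ hκ qm qp hε.1 hε.2, hreflect]
  simp only [smul_eq_mul, neg_zero]
  module

theorem stmt_4_general [CompleteSpace E] (qm qp : E) {a : ℝ} (ha : 0 < a) {κ : ℝ → E}
    (hκ : IntervalIntegrable κ volume (-1) 1) :
    (∀ ψ : ℝ → ℝ, ContDiff ℝ (⊤ : ℕ∞) ψ → HasCompactSupport ψ →
      ∃ l, Tendsto (fun ε ↦ ∫ x, ψ x • regularizedCoulomb qm qp a κ ε x) (𝓝[>] 0) (𝓝 l)) ↔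
    qp - qm = ∫ t in (-1 : ℝ)..1, κ t := by
  have hexpand := fun (ψ : ℝ → ℝ) (hψ : ContDiff ℝ (⊤ : ℕ∞) ψ) ↦
    exists_tendsto_integral_smul_regularizedCoulomb_sub hψ.continuous
      (hψ.differentiable (by simp) 0) hκ qm qp ha
  constructor
  · intro hconv
    let bump : ContDiffBump (0 : ℝ) := default
    have hbump_zero : bump 0 = 1 :=
      bump.one_of_mem_closedBall (Metric.mem_closedBall_self bump.rIn_pos.le)
    obtain ⟨l, hl⟩ := hconv bump bump.contDiff bump.hasCompactSupport
    obtain ⟨L, hL⟩ := hexpand bump bump.contDiff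
    have hlog := hl.sub hL
    simp only [sub_sub_cancel, hbump_zero, one_mul] at hlog
    exact (sub_eq_zero.1 (eq_zero_of_tendsto_smul_const (Real.tendsto_log_nhdsGT_zero.mono_right
      IsOrderBornology.atBot_le_cobounded) hlog)).symm
  · intro hcoeff ψ hψ _
    simpa only [hcoeff, sub_self, smul_zero, sub_zero] using hexpand ψ hψ

end RegularizedCoulomb

/-- The regularized Coulomb-like potentials `Q_ε` converge in the sense of
distributions as `ε → 0+` if and only if `q_+ − q_- = ∫_{-1}^{1} κ`. -/
theorem stmt_4 (qm qp a : ℝ) (ha : 0 < a)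
    (κ : ℝ → ℝ) (hκm : Measurable κ)
    (C : ℝ) (hκb : ∀ t ∈ Set.Ioo (-1 : ℝ) 1, |κ t| ≤ C)
    (Q : ℝ → ℝ → ℝ)
    (hQ : ∀ ε x, Q ε x =
      if |x| < ε then (Real.log ε / ε) * κ (x / ε)
      else if |x| < a then (if x < 0 then qm / x else qp / x)
      else 0) :
    (∀ ψ : ℝ → ℝ, ContDiff ℝ (⊤ : ℕ∞) ψ → HasCompactSupport ψ →
      ∃ l : ℝ, Tendsto (fun ε : ℝ => ∫ x : ℝ, Q ε x * ψ x)
        (nhdsWithin 0 (Set.Ioi 0)) (nhds l)) ↔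
    qp - qm = ∫ t in (-1 : ℝ)..1, κ t := by
  have hκ : IntervalIntegrable κ volume (-1) 1 := by
    rw [intervalIntegrable_iff_integrableOn_Ioo_of_le (by norm_num)]
    exact .of_bound measure_Ioo_lt_top hκm.aestronglyMeasurable C
      (ae_restrict_of_forall_mem measurableSet_Ioo hκb)
  have hQ_eq : ∀ ε x, Q ε x = regularizedCoulomb qm qp a κ ε x := fun ε x ↦ by
    simp only [hQ, regularizedCoulomb, smul_eq_mul, mul_ite, div_eq_inv_mul]
  simpa only [hQ_eq, smul_eq_mul, mul_comm] using stmt_4_general qm qp ha hκ
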